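/- Let f ∈ ℂ[x_0,…,x_n]_d with V(f) not a cone, let A = A(f), and let k ≤ ⌊d/2⌋ be the greatest integer such that the multiplication map ×L : A_{k−1} → A_k is injective for some L ∈ A_1. Then for every j ≤ k: if there do not exist n+1 algebraically independent elements (over ℂ) among the j-th order partial derivatives {∂^α f : |α| = j} (i.e., the j-th polar map is degenerate), then the j-th Hessian determinant hess^j_f vanishes identically. -/

import Mathlib

/-!
Write `L_x = ∑ xᵢ Xᵢ` for a point `x`, put `m = j - 1`, and suppose `hess^j_f ≠ 0`.  We look for
`n + 1` algebraically independent `j`-th partials.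

If `×L : A_{k-1} → A_k` is injective then `×L` is injective in all lower degrees, so `×L^m` is
injective on `A_1 = Q_1`.  This is an open condition on `L`, hence it holds for `L = L_x` at some
point `x` with `hess^j_f(x) ≠ 0`.

At such an `x` the Jacobian matrix of the `j`-th polar map has trivial kernel.  Indeed, let
`v ∈ Q_1` satisfy `(v B(f))(x) = 0` for all `B ∈ Q_j`.  By Euler's identity, applying `L_x` to a
form multiplies its value at `x` by a scalar, so `w = L_x^m v ∈ Q_j` also satisfies
`(w B(f))(x) = 0` for all `B ∈ Q_j`: the class of `w` lies in the kernel of `Hess^j_f(x)`.  Thus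
`w = 0` in `A_j`, and `v = 0` by injectivity.  Hence the gradients at `x` of some `n + 1` of the `j`-th partials are
linearly independent, and the Jacobian criterion applies.
-/

open MvPolynomial Module

/-- The differential operator `∂^α` on `ℂ[x_0,…,x_{N-1}]` given by a multi-index
`α : Fin N → ℕ`. -/
noncomputable def pd {N : ℕ} (α : Fin N → ℕ) :
    Module.End ℂ (MvPolynomial (Fin N) ℂ) :=
  (List.ofFn fun i =>
    ((MvPolynomial.pderiv (R := ℂ) i).toLinearMap :
      Module.End ℂ (MvPolynomial (Fin N) ℂ)) ^ (α i)).prod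

/-- Apolarity action: the `ℂ`-linear map `q ↦ q(f)` sending a differential operator
`q ∈ Q = ℂ[X_0,…,X_n]` to its action on `f`; it sends the monomial `X^α` to `∂^α f`. -/
noncomputable def DopL {N : ℕ} (f : MvPolynomial (Fin N) ℂ) :
    MvPolynomial (Fin N) ℂ →ₗ[ℂ] MvPolynomial (Fin N) ℂ :=
  (MvPolynomial.basisMonomials (Fin N) ℂ).constr ℂ (fun α => pd (fun i => α i) f)

/-- "Multiplication by some linear form `L` is injective from `A(f)_{j-1}` to `A(f)_j`":
there is `L ∈ Q_1` such that for all `q ∈ Q_{j-1}`, `Lq ∈ Ann(f)` implies `q ∈ Ann(f)`. -/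
def mulLinInjective {N : ℕ} (f : MvPolynomial (Fin N) ℂ) (j : ℕ) : Prop :=
  ∃ L ∈ homogeneousSubmodule (Fin N) ℂ 1,
    ∀ q ∈ homogeneousSubmodule (Fin N) ℂ (j - 1),
      DopL f (L * q) = 0 → DopL f q = 0

/-! ### The Jacobian criterion for algebraic independence -/

section Jacobian

variable {ι R : Type*}

lemma derivation_aeval_eq_sum [Fintype ι] [CommSemiring R] {A M : Type*} [CommSemiring A]
    [Algebra R A] [AddCommMonoid M] [Module A M] [Module R M] (D : Derivation R A M) (g : ι → A)
    (P : MvPolynomial ι R) : D (aeval g P) = ∑ i, aeval g (pderiv i P) • D (g i) := by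
  classical
  induction P using MvPolynomial.induction_on with
  | C a => simp
  | add P Q hP hQ => simp only [map_add, hP, hQ, add_smul, Finset.sum_add_distrib]
  | mul_X P i hP =>
    simp [pderiv_X, Pi.single_apply, hP, add_smul, mul_smul, Finset.sum_add_distrib,
      Finset.smul_sum, apply_ite (aeval g), ite_smul]

lemma totalDegree_pderiv_le [CommSemiring R] (i : ι) (P : MvPolynomial ι R) :
    (pderiv i P).totalDegree ≤ P.totalDegree - 1 := by
  refine Finset.sup_le fun m hm => ?_
  rw [MvPolynomial.mem_support_iff, coeff_pderiv] at hm
  have hle := le_totalDegree (MvPolynomial.mem_support_iff.2 (left_ne_zero_of_mul hm))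
  rw [Finsupp.sum_add_index' (fun _ => rfl) (fun _ _ _ => rfl), Finsupp.sum_single_index rfl] at hle
  omega

lemma eq_C_coeff_zero_of_pderiv_eq_zero [CommRing R] [IsAddTorsionFree R] {P : MvPolynomial ι R}
    (h : ∀ i, pderiv i P = 0) : P = C (coeff 0 P) :=
  coe_injective ι R <| MvPowerSeries.pderiv.ext (fun i => by simp [MvPowerSeries.pderiv_coe, h])
    (by rw [coe_C, MvPowerSeries.constantCoeff_C, ← MvPowerSeries.coeff_zero_eq_constantCoeff_apply,
      coeff_coe])

/-- Differentiating an algebraic relation `P(g) = 0` gives the linear relation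
`∑ (∂P/∂yᵢ)(g) • D gᵢ = 0`, hence relations `(∂P/∂yᵢ)(g) = 0` of smaller degree. -/
lemma algebraicIndependent_of_linearIndependent_derivation [Finite ι] [CommRing R]
    [IsAddTorsionFree R] {A M : Type*} [CommRing A] [Algebra R A] [FaithfulSMul R A]
    [AddCommGroup M] [Module A M] [Module R M] (D : Derivation R A M) {g : ι → A}
    (hg : LinearIndependent A fun i => D (g i)) : AlgebraicIndependent R g := by
  cases nonempty_fintype ι
  refine algebraicIndependent_iff.2 fun P => ?_
  induction hdeg : P.totalDegree using Nat.strong_induction_on generalizing P with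
  | _ n ih =>
    intro hP
    have hC {Q : MvPolynomial ι R} (hQ : Q = C (coeff 0 Q)) (h0 : aeval g Q = 0) : Q = 0 := by
      rw [hQ] at h0 ⊢
      simpa using h0
    obtain rfl | hn := n.eq_zero_or_pos
    · exact hC (totalDegree_eq_zero_iff_eq_C.1 hdeg) hP
    · have hrel : ∑ i, aeval g (pderiv i P) • D (g i) = 0 := by
        rw [← derivation_aeval_eq_sum, hP, map_zero]
      refine hC (eq_C_coeff_zero_of_pderiv_eq_zero fun i => ?_) hP
      have := totalDegree_pderiv_le i P
      exact ih _ (by omega) _ rfl (Fintype.linearIndependent_iff.1 hg _ hrel i)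

lemma algebraicIndependent_of_det_jacobian_ne_zero [Fintype ι] [DecidableEq ι] [CommRing R]
    [IsDomain R] [CharZero R] {g : ι → MvPolynomial ι R}
    (h : (Matrix.of fun i l => pderiv l (g i)).det ≠ 0) : AlgebraicIndependent R g := by
  refine algebraicIndependent_of_linearIndependent_derivation
    (KaehlerDifferential.D R (MvPolynomial ι R)) ?_
  refine .of_comp (KaehlerDifferential.mvPolynomialBasis R ι).equivFun.toLinearMap ?_
  convert Matrix.linearIndependent_rows_of_det_ne_zero h using 1
  ext i l
  simp

end Jacobian

section Gradient

variable {σ K : Type*} [Fintype σ] [Field K]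

lemma exists_linearIndependent_of_forall_dotProduct {T : Set (σ → K)}
    (hT : ∀ v : σ → K, (∀ t ∈ T, v ⬝ᵥ t = 0) → v = 0) :
    ∃ b : σ → σ → K, (∀ i, b i ∈ T) ∧ LinearIndependent K b := by
  classical
  have hspan : ⊤ ≤ Submodule.span K T := by
    by_contra hlt
    obtain ⟨φ, hφ, hTφ⟩ := Submodule.exists_le_ker_of_lt_top _ (lt_top_iff_not_top_le.2 hlt)
    obtain ⟨v, rfl⟩ := (dotProductEquiv K σ).surjective φ
    refine hφ ?_
    rw [hT v fun t ht => hTφ (Submodule.subset_span ht), map_zero]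
  let b := Basis.ofSpan hspan
  let e := (Pi.basisFun K σ).indexEquiv b
  exact ⟨b ∘ e, fun i => Basis.ofSpan_subset hspan ⟨e i, rfl⟩,
    b.linearIndependent.comp _ e.injective⟩

lemma exists_algebraicIndependent_of_forall_gradient [CharZero K] {S : Set (MvPolynomial σ K)}
    (x : σ → K) (hS : ∀ v : σ → K, (∀ h ∈ S, ∑ i, v i * eval x (pderiv i h) = 0) → v = 0) :
    ∃ g : σ → MvPolynomial σ K, (∀ i, g i ∈ S) ∧ AlgebraicIndependent K g := by
  classical
  obtain ⟨b, hbS, hb⟩ := exists_linearIndependent_of_forall_dotProduct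
    (T := (fun h i => eval x (pderiv i h)) '' S)
    fun v hv => hS v fun h hh => hv _ (Set.mem_image_of_mem _ hh)
  choose g hgS hgb using hbS
  refine ⟨g, hgS, algebraicIndependent_of_det_jacobian_ne_zero fun hdet => ?_⟩
  have hbdet : (Matrix.of b).det = eval x (Matrix.of fun i l => pderiv l (g i)).det := by
    rw [RingHom.map_det]
    congr 1
    ext i l
    exact (congrFun (hgb i) l).symm
  have hunit := (Matrix.isUnit_iff_isUnit_det _).1
    (Matrix.linearIndependent_rows_iff_isUnit (A := Matrix.of b) |>.1 hb)
  rw [hbdet, hdet, map_zero] at hunit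
  exact not_isUnit_zero hunit

end Gradient

/-! ### Genericity of injectivity -/

lemma exists_eval_ne_zero {σ R : Type*} [CommRing R] [IsDomain R] [Infinite R]
    {P : MvPolynomial σ R} (hP : P ≠ 0) : ∃ x, eval x P ≠ 0 := by
  contrapose! hP
  exact MvPolynomial.funext fun x => by rw [hP x, map_zero]

/-- After composing with a left inverse of `T y`, injectivity becomes the nonvanishing of a
determinant, which is polynomial in the parameter. -/
lemma exists_eval_ne_zero_and_injective {σ K V W : Type*} [Field K] [Infinite K]
    [AddCommGroup V] [Module K V] [FiniteDimensional K V] [AddCommGroup W] [Module K W]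
    {T : (σ → K) → V →ₗ[K] W}
    (hT : ∀ (φ : W →ₗ[K] K) (v : V), ∃ P : MvPolynomial σ K, ∀ x, eval x P = φ (T x v))
    {H : MvPolynomial σ K} (hH : H ≠ 0) {y : σ → K} (hy : Function.Injective (T y)) :
    ∃ x, eval x H ≠ 0 ∧ Function.Injective (T x) := by
  obtain ⟨G, hG⟩ := (T y).exists_leftInverse_of_injective (LinearMap.ker_eq_bot.2 hy)
  let b := finBasis K V
  choose M hM using fun i l => hT (b.coord i ∘ₗ G) (b l)
  have hdet (x : σ → K) : eval x (Matrix.of M).det = LinearMap.det (G ∘ₗ T x) := by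
    rw [RingHom.map_det, ← LinearMap.det_toMatrix b]
    congr 1
    ext i l
    simp [hM, LinearMap.toMatrix_apply]
  have hM0 : (Matrix.of M).det ≠ 0 := fun h => by
    have := hdet y
    rw [h, hG, LinearMap.det_id, map_zero] at this
    exact zero_ne_one this
  obtain ⟨x, hx⟩ := exists_eval_ne_zero (mul_ne_zero hH hM0)
  rw [map_mul, hdet] at hx
  have hunit : IsUnit (G ∘ₗ T x) :=
    (LinearMap.isUnit_iff_isUnit_det _).2 (right_ne_zero_of_mul hx).isUnit
  exact ⟨x, left_ne_zero_of_mul hx, .of_comp (f := G) ((Module.End.isUnit_iff _).1 hunit).1⟩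

lemma exists_eval_eq_map_linearCombination_pow_mul {σ R A : Type*} [Fintype σ] [CommSemiring R]
    [CommSemiring A] [Algebra R A] (a : σ → A) (φ : A →ₗ[R] R) (m : ℕ) (q : A) :
    ∃ P : MvPolynomial σ R, ∀ x,
      eval x P = φ (Fintype.linearCombination R a x ^ m * q) := by
  induction m generalizing q with
  | zero => exact ⟨C (φ q), by simp⟩
  | succ m ih =>
    choose P hP using fun i => ih (a i * q)
    refine ⟨∑ i, X i * P i, fun x => ?_⟩
    rw [pow_succ, mul_assoc, Fintype.linearCombination_apply, Finset.sum_mul, Finset.mul_sum]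
    simp [hP, Fintype.linearCombination_apply]

/-! ### Linear forms -/

section LinForm

variable {σ R : Type*} [Fintype σ] [CommSemiring R]

/-- The linear form `∑ xᵢ Xᵢ` attached to a point `x`; as a differential operator it is the
derivative in the direction `x`. -/
noncomputable abbrev linForm : (σ → R) →ₗ[R] MvPolynomial σ R :=
  Fintype.linearCombination R X

lemma range_linForm :
    LinearMap.range (linForm (σ := σ) (R := R)) = homogeneousSubmodule σ R 1 := by
  rw [homogeneousSubmodule_one_eq_span_X, Fintype.range_linearCombination]

lemma linForm_isHomogeneous (x : σ → R) : (linForm x).IsHomogeneous 1 :=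
  range_linForm.le ⟨x, rfl⟩

lemma linForm_injective : Function.Injective (linForm (σ := σ) (R := R)) :=
  (linearIndependent_X _ _).fintypeLinearCombination_injective

end LinForm

/-! ### The apolarity action -/

lemma list_prod_map_mul_of_commute {ι M : Type*} [Monoid M] (l : List ι) {u v : ι → M}
    (h : ∀ i j, Commute (u i) (v j)) :
    (l.map fun i => u i * v i).prod = (l.map u).prod * (l.map v).prod := by
  induction l with
  | nil => simp
  | cons i l ih =>
    have hc : Commute (v i) (l.map u).prod :=
      Commute.list_prod_right _ _ fun y hy => by
        obtain ⟨j, -, rfl⟩ := List.mem_map.1 hy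
        exact (h j i).symm
    simp only [List.map_cons, List.prod_cons, ih]
    rw [mul_assoc, ← mul_assoc (v i), hc.eq, mul_assoc, mul_assoc]

lemma pderiv_pderiv_comm {σ R : Type*} [CommRing R] (i j : σ) (p : MvPolynomial σ R) :
    pderiv i (pderiv j p) = pderiv j (pderiv i p) := by
  classical
  have h : (⁅pderiv i, pderiv j⁆ : Derivation R (MvPolynomial σ R) (MvPolynomial σ R)) = 0 :=
    derivation_ext fun l => by
      rw [Derivation.commutator_apply]
      simp [pderiv_X, Pi.single_apply, apply_ite]
  simpa [Derivation.commutator_apply, sub_eq_zero] using congr($h p)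

section Apolarity

variable {N : ℕ}

lemma pd_add (α β : Fin N → ℕ) : pd (α + β) = pd α * pd β := by
  simp only [pd, List.ofFn_eq_map, Pi.add_apply, pow_add]
  exact list_prod_map_mul_of_commute _ fun i j =>
    Commute.pow_pow (LinearMap.ext fun p => pderiv_pderiv_comm i j p) _ _

lemma pd_zero : pd (0 : Fin N → ℕ) = 1 := by
  simp [pd]

lemma pd_single (i : Fin N) : pd (Pi.single i 1) = (pderiv i).toLinearMap := by
  rw [pd, List.ofFn_eq_map, List.prod_map_eq_pow_single i]
  · simp
  · intro l hl _
    simp [hl]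

lemma DopL_monomial (f : MvPolynomial (Fin N) ℂ) (α : Fin N →₀ ℕ) (c : ℂ) :
    DopL f (monomial α c) = c • pd α f := by
  have h : monomial α c = c • basisMonomials (Fin N) ℂ α := by simp [smul_monomial]
  rw [h, map_smul, DopL, Basis.constr_basis]

lemma DopL_one (f : MvPolynomial (Fin N) ℂ) : DopL f 1 = f := by
  rw [← C_1, C_apply, DopL_monomial, one_smul, Finsupp.coe_zero, pd_zero, Module.End.one_apply]

lemma DopL_X (f : MvPolynomial (Fin N) ℂ) (i : Fin N) : DopL f (X i) = pderiv i f := by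
  rw [X, DopL_monomial, one_smul, Finsupp.single_eq_pi_single, pd_single, Derivation.coeFn_coe]

lemma DopL_mul (f p q : MvPolynomial (Fin N) ℂ) : DopL f (p * q) = DopL (DopL f q) p := by
  induction p using MvPolynomial.induction_on' with
  | add p₁ p₂ h₁ h₂ => rw [add_mul, map_add, map_add, h₁, h₂]
  | monomial α a =>
    rw [DopL_monomial]
    induction q using MvPolynomial.induction_on' with
    | add q₁ q₂ h₁ h₂ => rw [mul_add, map_add, map_add, map_add, smul_add, h₁, h₂]
    | monomial β b =>
      rw [monomial_mul, DopL_monomial, DopL_monomial, map_smul, smul_smul, Finsupp.coe_add,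
        pd_add, Module.End.mul_apply]

lemma span_pd_eq_map_DopL (f : MvPolynomial (Fin N) ℂ) (j : ℕ) :
    Submodule.span ℂ {h | ∃ α : Fin N → ℕ, (∑ t, α t) = j ∧ h = pd α f} =
      (homogeneousSubmodule (Fin N) ℂ j).map (DopL f) := by
  refine le_antisymm (Submodule.span_le.2 ?_) (Submodule.map_le_iff_le_comap.2 fun q hq => ?_)
  · rintro _ ⟨α, hα, rfl⟩
    refine ⟨monomial (Finsupp.equivFunOnFinite.symm α) 1, isHomogeneous_monomial _ ?_, ?_⟩
    · rw [Finsupp.degree_eq_sum]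
      exact hα
    · rw [DopL_monomial, one_smul, Finsupp.coe_equivFunOnFinite_symm]
  · rw [Submodule.mem_comap, q.as_sum, map_sum]
    refine Submodule.sum_mem _ fun α hα => ?_
    rw [DopL_monomial]
    refine Submodule.smul_mem _ _ (Submodule.subset_span ⟨α, ?_, rfl⟩)
    rw [← Finsupp.degree_eq_sum, hq.degree_eq_sum_deg_support hα, Finsupp.degree_apply]

lemma DopL_linForm (g : MvPolynomial (Fin N) ℂ) (v : Fin N → ℂ) :
    DopL g (linForm v) = ∑ i, v i • pderiv i g := by
  simp [Fintype.linearCombination_apply, DopL_X]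
lemma DopL_X_mul (f q : MvPolynomial (Fin N) ℂ) (i : Fin N) :
    DopL f (X i * q) = pderiv i (DopL f q) := by
  rw [DopL_mul, DopL_X]

lemma DopL_isHomogeneous {d i : ℕ} {f q : MvPolynomial (Fin N) ℂ} (hf : f.IsHomogeneous d)
    (hq : q.IsHomogeneous i) : (DopL f q).IsHomogeneous (d - i) := by
  rw [← mem_homogeneousSubmodule, ← homogeneousSubmodule_one_pow, ← range_linForm] at hq
  induction hq using Submodule.pow_induction_on_left' with
  | algebraMap c =>
    rw [Algebra.algebraMap_eq_smul_one, map_smul, DopL_one]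
    exact (homogeneousSubmodule _ ℂ d).smul_mem c hf
  | add p q i _ _ hp hq =>
    rw [map_add]
    exact hp.add hq
  | mem_mul L hL i q _ ih =>
    obtain ⟨v, rfl⟩ := hL
    rw [DopL_mul, DopL_linForm]
    exact IsHomogeneous.sum _ _ _ fun l _ => (homogeneousSubmodule _ ℂ _).smul_mem _ ih.pderiv

/-! ### Euler's identity -/

lemma eval_DopL_linForm {e : ℕ} {g : MvPolynomial (Fin N) ℂ} (hg : g.IsHomogeneous e)
    (x : Fin N → ℂ) : eval x (DopL g (linForm x)) = e * eval x g := by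
  simpa [DopL_linForm, smul_eval] using congrArg (eval x) hg.sum_X_mul_pderiv

lemma eval_DopL_linForm_pow {e : ℕ} {g : MvPolynomial (Fin N) ℂ} (hg : g.IsHomogeneous e)
    (x : Fin N → ℂ) (m : ℕ) :
    eval x (DopL g (linForm x ^ m)) = e.descFactorial m * eval x g := by
  induction m with
  | zero => simp [DopL_one]
  | succ m ih =>
    have hL : (linForm x ^ m).IsHomogeneous m := by
      simpa using (linForm_isHomogeneous x).pow m
    rw [pow_succ', DopL_mul, eval_DopL_linForm (DopL_isHomogeneous hg hL), ih,
      Nat.descFactorial_succ, Nat.cast_mul, mul_assoc]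

lemma eq_zero_of_pderiv_eq_zero {σ R : Type*} [CommRing R] [IsAddTorsionFree R] {e : ℕ}
    {g : MvPolynomial σ R} (hg : g.IsHomogeneous e) (he : e ≠ 0) (h : ∀ i, pderiv i g = 0) :
    g = 0 := by
  rw [eq_C_coeff_zero_of_pderiv_eq_zero h, hg.coeff_eq_zero (by simpa using he.symm), map_zero]

/-! ### Multiplication by a linear form -/

/-- If `Lq = 0` in `A(f)`, then `L Xₛ q = 0` and hence `Xₛ q = 0` for all `s`: all first partials of
the form `q(f)`, which has positive degree, vanish. -/
lemma mul_injective_of_le {d r i : ℕ} {f L : MvPolynomial (Fin N) ℂ} (hf : f.IsHomogeneous d)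
    (hrd : r ≤ d)
    (hL : ∀ q ∈ homogeneousSubmodule (Fin N) ℂ r, DopL f (L * q) = 0 → DopL f q = 0)
    (hi : i ≤ r) :
    ∀ q ∈ homogeneousSubmodule (Fin N) ℂ i, DopL f (L * q) = 0 → DopL f q = 0 := by
  induction hi using Nat.decreasingInduction with
  | self => exact hL
  | of_succ i hi ih =>
    intro q hq h
    refine eq_zero_of_pderiv_eq_zero (DopL_isHomogeneous hf hq) (by omega) fun s => ?_
    rw [← DopL_X_mul]
    refine ih _ ?_ ?_
    · rw [add_comm]
      exact (isHomogeneous_X ℂ s).mul hq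
    · rw [mul_left_comm, DopL_X_mul, h, map_zero]

lemma pow_mul_injective {d r i m : ℕ} {f L : MvPolynomial (Fin N) ℂ} (hf : f.IsHomogeneous d)
    (hrd : r ≤ d) (hL1 : L.IsHomogeneous 1)
    (hL : ∀ q ∈ homogeneousSubmodule (Fin N) ℂ r, DopL f (L * q) = 0 → DopL f q = 0)
    (hm : m + i ≤ r + 1) {q : MvPolynomial (Fin N) ℂ} (hq : q.IsHomogeneous i)
    (h : DopL f (L ^ m * q) = 0) : DopL f q = 0 := by
  induction m with
  | zero => simpa using h
  | succ m ih =>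
    refine ih (by omega) (mul_injective_of_le hf hrd hL (i := m + i) (by omega) _ ?_ ?_)
    · simpa using (hL1.pow m).mul hq
    · rwa [← mul_assoc, ← pow_succ']

lemma mulLinInjective.exists_linForm_pow_mul_injective {d k m : ℕ} {f : MvPolynomial (Fin N) ℂ}
    (hf : f.IsHomogeneous d)
    (hcone : homogeneousSubmodule (Fin N) ℂ 1 ⊓ LinearMap.ker (DopL f) = ⊥)
    (hinj : mulLinInjective f k) (hkd : k ≤ d) (hm : m < k) :
    ∃ y : Fin N → ℂ, ∀ v, DopL f (linForm y ^ m * linForm v) = 0 → v = 0 := by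
  obtain ⟨L, hL1, hL⟩ := hinj
  obtain ⟨y, rfl⟩ := range_linForm.ge hL1
  refine ⟨y, fun v hv => linForm_injective ?_⟩
  have hker : DopL f (linForm v) = 0 :=
    pow_mul_injective hf (by omega) hL1 hL (by omega) (linForm_isHomogeneous v) hv
  rw [map_zero, ← Submodule.mem_bot ℂ, ← hcone]
  exact ⟨linForm_isHomogeneous v, hker⟩

lemma exists_generic_linForm {f H : MvPolynomial (Fin N) ℂ} (hH : H ≠ 0) {y : Fin N → ℂ} {m : ℕ}
    (hy : ∀ v, DopL f (linForm y ^ m * linForm v) = 0 → v = 0) :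
    ∃ x, eval x H ≠ 0 ∧ ∀ v, DopL f (linForm x ^ m * linForm v) = 0 → v = 0 := by
  let T (x : Fin N → ℂ) : (Fin N → ℂ) →ₗ[ℂ] MvPolynomial (Fin N) ℂ :=
    DopL f ∘ₗ LinearMap.mulLeft ℂ (linForm x ^ m) ∘ₗ linForm
  obtain ⟨x, hxH, hx⟩ := exists_eval_ne_zero_and_injective (T := T)
    (fun φ v => exists_eval_eq_map_linearCombination_pow_mul X (φ ∘ₗ DopL f) m (linForm v)) hH
    ((injective_iff_map_eq_zero _).2 hy)
  exact ⟨x, hxH, (injective_iff_map_eq_zero _).1 hx⟩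

/-! ### The Hessian matrix and the polar map -/

/-- The Hessian matrix of `f` with respect to a family `B` of differential operators; it is
`Hess^j_f` when the classes of `B` form a basis of `A(f)_j`. -/
noncomputable def hessianMatrix {ι : Type*} (f : MvPolynomial (Fin N) ℂ)
    (B : ι → MvPolynomial (Fin N) ℂ) : Matrix ι ι (MvPolynomial (Fin N) ℂ) :=
  Matrix.of fun u v => DopL f (B u * B v)

section Hessian

variable {ι : Type*} [Fintype ι] [DecidableEq ι] {f : MvPolynomial (Fin N) ℂ}
  {B : ι → MvPolynomial (Fin N) ℂ} {x : Fin N → ℂ}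

/-- The coordinates of the class of `w` with respect to the classes of the `B u` form a vector in
the kernel of the Hessian matrix at `x`. -/
lemma DopL_eq_zero_of_eval_mul_eq_zero (hx : eval x (hessianMatrix f B).det ≠ 0)
    {w : MvPolynomial (Fin N) ℂ}
    (hw : DopL f w ∈ Submodule.span ℂ (Set.range fun u => DopL f (B u)))
    (hwB : ∀ u, eval x (DopL f (w * B u)) = 0) : DopL f w = 0 := by
  obtain ⟨c, hc⟩ := (Submodule.mem_span_range_iff_exists_fun ℂ).1 hw
  have hc' : DopL f (∑ s, c s • B s) = DopL f w := by simpa using hc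
  have hexpand (u : ι) : DopL f (w * B u) = ∑ s, c s • DopL f (B s * B u) := by
    rw [mul_comm, DopL_mul, ← hc', ← DopL_mul, Finset.mul_sum, map_sum]
    simp [mul_comm]
  have hc0 : c = 0 := by
    rw [RingHom.map_det] at hx
    refine Matrix.eq_zero_of_vecMul_eq_zero hx (funext fun u => ?_)
    simpa [hexpand, hessianMatrix, Matrix.vecMul, dotProduct, smul_eval] using hwB u
  simp [← hc, hc0]

/-- By Euler's identity, `w = L_xᵐ v` inherits `(w B(f))(x) = 0` from `v`. -/
lemma eq_zero_of_eval_linForm_mul_eq_zero {d m : ℕ} (hf : f.IsHomogeneous d)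
    (hB : ∀ u, (B u).IsHomogeneous (m + 1))
    (hspan : (homogeneousSubmodule (Fin N) ℂ (m + 1)).map (DopL f) ≤
      Submodule.span ℂ (Set.range fun u => DopL f (B u)))
    (hx : eval x (hessianMatrix f B).det ≠ 0)
    (hinj : ∀ v, DopL f (linForm x ^ m * linForm v) = 0 → v = 0)
    {v : Fin N → ℂ} (hv : ∀ u, eval x (DopL f (linForm v * B u)) = 0) : v = 0 := by
  have hw : (linForm x ^ m * linForm v).IsHomogeneous (m + 1) := by
    simpa using ((linForm_isHomogeneous x).pow m).mul (linForm_isHomogeneous v)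
  refine hinj v (DopL_eq_zero_of_eval_mul_eq_zero hx (hspan ⟨_, hw, rfl⟩) fun u => ?_)
  have hvB := DopL_isHomogeneous hf ((linForm_isHomogeneous v).mul (hB u))
  rw [mul_assoc, DopL_mul, eval_DopL_linForm_pow hvB, hv, mul_zero]

lemma exists_algebraicIndependent_pd {d m : ℕ} (hf : f.IsHomogeneous d)
    (hB : ∀ u, (B u).IsHomogeneous (m + 1))
    (hspan : (homogeneousSubmodule (Fin N) ℂ (m + 1)).map (DopL f) ≤
      Submodule.span ℂ (Set.range fun u => DopL f (B u)))
    (hx : eval x (hessianMatrix f B).det ≠ 0)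
    (hinj : ∀ v, DopL f (linForm x ^ m * linForm v) = 0 → v = 0) :
    ∃ g : Fin N → MvPolynomial (Fin N) ℂ,
      (∀ i, ∃ α : Fin N → ℕ, (∑ t, α t) = m + 1 ∧ g i = pd α f) ∧ AlgebraicIndependent ℂ g := by
  refine exists_algebraicIndependent_of_forall_gradient
    (S := {h | ∃ α : Fin N → ℕ, (∑ t, α t) = m + 1 ∧ h = pd α f}) x fun v hv =>
      eq_zero_of_eval_linForm_mul_eq_zero hf hB hspan hx hinj fun u => ?_
  let evalDeriv : MvPolynomial (Fin N) ℂ →ₗ[ℂ] ℂ :=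
    ∑ i, v i • (aeval x).toLinearMap ∘ₗ (pderiv i).toLinearMap
  have hzero : Submodule.span ℂ {h | ∃ α : Fin N → ℕ, (∑ t, α t) = m + 1 ∧ h = pd α f} ≤
      LinearMap.ker evalDeriv :=
    Submodule.span_le.2 fun h hh => by simpa [evalDeriv, aeval_eq_eval] using hv h hh
  rw [span_pd_eq_map_DopL] at hzero
  have hBu : evalDeriv (DopL f (B u)) = 0 := hzero ⟨B u, hB u, rfl⟩
  simpa [evalDeriv, aeval_eq_eval, DopL_mul, DopL_linForm, smul_eval] using hBu

end Hessian

end Apolarity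

theorem degenerate_polar_implies_higher_hessian_vanishes_general
    {N d m : ℕ} {ι : Type*} [Fintype ι] [DecidableEq ι] {f : MvPolynomial (Fin N) ℂ}
    (hf : f.IsHomogeneous d)
    (hinj : ∃ y : Fin N → ℂ, ∀ v, DopL f (linForm y ^ m * linForm v) = 0 → v = 0)
    (hdeg : ¬ ∃ g : Fin N → MvPolynomial (Fin N) ℂ,
      (∀ i, ∃ α : Fin N → ℕ, (∑ t, α t) = m + 1 ∧ g i = pd α f) ∧ AlgebraicIndependent ℂ g)
    {B : ι → MvPolynomial (Fin N) ℂ} (hB : ∀ u, (B u).IsHomogeneous (m + 1))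
    (hspan : Submodule.span ℂ {h | ∃ α : Fin N → ℕ, (∑ t, α t) = m + 1 ∧ h = pd α f} ≤
      Submodule.span ℂ (Set.range fun u => DopL f (B u))) :
    (hessianMatrix f B).det = 0 := by
  by_contra hdet
  obtain ⟨y, hy⟩ := hinj
  obtain ⟨x, hx, hxinj⟩ := exists_generic_linForm hdet hy
  rw [span_pd_eq_map_DopL] at hspan
  exact hdeg (exists_algebraicIndependent_pd hf hB hspan hx hxinj)

/-- **Corollary.** Let `f` be homogeneous of degree `d` with `V(f)` not a cone
(`Ann(f)_1 = 0`), and let `k ≤ ⌊d/2⌋` be the greatest integer such that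
`×L : A_{k−1} → A_k` is injective for some `L ∈ A_1`.  Then for every `1 ≤ j ≤ k`:
if there are no `n+1` algebraically independent elements among the `j`-th order partial
derivatives of `f` (the `j`-th polar map is degenerate), then the `j`-th Hessian
determinant vanishes: for every family `B` of operators in `Q_j` whose images `B_u(f)`
form a basis of the span of the `j`-th partials (i.e. whose classes form a basis of
`A(f)_j`), `det (B_u B_v (f)) = 0`. -/
theorem degenerate_polar_implies_higher_hessian_vanishes
    {n d k : ℕ} (f : MvPolynomial (Fin (n + 1)) ℂ) (hf : f.IsHomogeneous d)
    (hcone : homogeneousSubmodule (Fin (n + 1)) ℂ 1 ⊓ LinearMap.ker (DopL f) = ⊥)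
    (hk1 : 1 ≤ k) (hkd : 2 * k ≤ d)
    (hinj : mulLinInjective f k)
    (hmax : ∀ k' : ℕ, 1 ≤ k' → 2 * k' ≤ d → mulLinInjective f k' → k' ≤ k) :
    ∀ j : ℕ, 1 ≤ j → j ≤ k →
      (¬ ∃ g : Fin (n + 1) → MvPolynomial (Fin (n + 1)) ℂ,
          (∀ i, ∃ α : Fin (n + 1) → ℕ, (∑ t, α t) = j ∧ g i = pd α f) ∧
          AlgebraicIndependent ℂ g) →
      ∀ (a : ℕ) (B : Fin a → MvPolynomial (Fin (n + 1)) ℂ),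
        (∀ u, B u ∈ homogeneousSubmodule (Fin (n + 1)) ℂ j) →
        LinearIndependent ℂ (fun u => DopL f (B u)) →
        Submodule.span ℂ (Set.range fun u => DopL f (B u)) =
          Submodule.span ℂ
            {h | ∃ α : Fin (n + 1) → ℕ, (∑ t, α t) = j ∧ h = pd α f} →
        Matrix.det (Matrix.of fun u v => DopL f (B u * B v)) = 0 := by
  intro j hj hjk hdeg a B hB _ hspan
  obtain ⟨m, rfl⟩ := Nat.exists_eq_add_of_le' hj
  exact degenerate_polar_implies_higher_hessian_vanishes_general hf
    (hinj.exists_linForm_pow_mul_injective hf hcone (by omega) hjk) hdeg hB hspan.ge
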